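/- arXiv:2212.07260 — 2 statements merged into one kernel-verified Lean document; each statement's English description precedes it below -/
import Mathlib

section
/- (a) For every partition B of ℕ×ℕ into infinitely many infinite sets, if Sel ⊥ Fin(B), then ED is a P(Fin(B))-ideal. (b) The converse fails: there exists a partition B of ℕ×ℕ into infinitely many infinite sets such that ED is a P(Fin(B))-ideal but Sel is not orthogonal to Fin(B) (indeed Sel ⊆ Fin(B) and ED ⊥ Fin(B)). -/
open Set

/-- An ideal on an (infinite) set: contains all finite sets, is proper,
closed under subsets and finite unions. -/
def IsIdeal {α : Type*} (I : Set (Set α)) : Prop :=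
  (∀ s : Set α, s.Finite → s ∈ I) ∧ (Set.univ : Set α) ∉ I ∧
  (∀ s t : Set α, s ∈ I → t ⊆ s → t ∈ I) ∧
  (∀ s t : Set α, s ∈ I → t ∈ I → s ∪ t ∈ I)

/-- `I` is a `P(J)`-ideal. -/
def IsPJIdeal {α : Type*} (I J : Set (Set α)) : Prop :=
  ∀ f : ℕ → Set α, (∀ n, f n ∈ I) → ∃ A ∈ I, ∀ n, f n \ A ∈ J

/-- Orthogonality of two ideals. -/
def Orth {α : Type*} (I J : Set (Set α)) : Prop :=
  ∃ A : Set α, A ∈ I ∧ Aᶜ ∈ J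

/-- `I ⊆↾ J` : the whole ideal `I` has a `J`-union in `I`. -/
def SubRestr {α : Type*} (I J : Set (Set α)) : Prop :=
  ∃ E ∈ I, ∀ A ∈ I, A \ E ∈ J

/-- A tall ideal. -/
def IsTall {α : Type*} (I : Set (Set α)) : Prop :=
  ∀ X : Set α, X.Infinite → ∃ A ∈ I, (X ∩ A).Infinite

/-- A nowhere tall ideal. -/
def NowhereTall {α : Type*} (J : Set (Set α)) : Prop :=
  ∀ A : Set α, A ∉ J → ∃ B ⊆ A, B.Infinite ∧
    (fun j => j ∩ B) '' J = {s : Set α | s ⊆ B ∧ s.Finite}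

/-- An almost disjoint family: infinite members, pairwise finite intersections. -/
def IsADFamily {α : Type*} (C : Set (Set α)) : Prop :=
  (∀ A ∈ C, A.Infinite) ∧ ∀ A ∈ C, ∀ B ∈ C, A ≠ B → (A ∩ B).Finite

/-- The ideal generated by a family `C` (together with the finite sets). -/
def genIdeal {α : Type*} (C : Set (Set α)) : Set (Set α) :=
  {A | ∃ F : Finset (Set α), ↑F ⊆ C ∧ (A \ ⋃₀ ↑F).Finite}

/-- The `n`-th vertical `{n} × ℕ` in `ℕ × ℕ`. -/
def Vert (n : ℕ) : Set (ℕ × ℕ) := {p | p.1 = n}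

/-- A partition of `ℕ × ℕ` into infinitely many infinite sets (indexed by `ℕ`). -/
def IsPartition (A : ℕ → Set (ℕ × ℕ)) : Prop :=
  (∀ n, (A n).Infinite) ∧ (∀ i j, i ≠ j → A i ∩ A j = ∅) ∧ (⋃ n, A n) = Set.univ

/-- `Fin(A)`: the ideal generated by the partition `A`. -/
def FinPart (A : ℕ → Set (ℕ × ℕ)) : Set (Set (ℕ × ℕ)) :=
  {X | ∃ F : Finset ℕ, (X \ ⋃ n ∈ F, A n).Finite}

/-- `OFin(A)`: sets with finite intersection with each member of `A`. -/
def OFinPart (A : ℕ → Set (ℕ × ℕ)) : Set (Set (ℕ × ℕ)) :=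
  {X | ∀ n, (X ∩ A n).Finite}

/-- `FinFin(A)`: the ideal generated by `Fin(A) ∪ OFin(A)`. -/
def FinFinPart (A : ℕ → Set (ℕ × ℕ)) : Set (Set (ℕ × ℕ)) :=
  {X | ∃ Y ∈ FinPart A, ∃ Z ∈ OFinPart A, X ⊆ Y ∪ Z}

/-- `Sel(A)`: sets meeting each member of `A` in at most `m` points, for some `m`. -/
def SelPart (A : ℕ → Set (ℕ × ℕ)) : Set (Set (ℕ × ℕ)) :=
  {X | ∃ m : ℕ, ∀ n, (X ∩ A n).encard ≤ (m : ℕ∞)}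

/-- `ED(A)`: sets meeting all but finitely many members of `A` in at most `m` points. -/
def EDPart (A : ℕ → Set (ℕ × ℕ)) : Set (Set (ℕ × ℕ)) :=
  {X | ∃ m : ℕ, {n | (m : ℕ∞) < (X ∩ A n).encard}.Finite}

/-- The ideal `Sel` on `ℕ × ℕ` (w.r.t. the vertical partition). -/
def SelI : Set (Set (ℕ × ℕ)) := SelPart Vert

/-- The ideal `ED` on `ℕ × ℕ` (w.r.t. the vertical partition). -/
def EDI : Set (Set (ℕ × ℕ)) := EDPart Vert

/-- The ideal `Fin × ∅` on `ℕ × ℕ`, generated by the verticals. -/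
def FinVert : Set (Set (ℕ × ℕ)) := FinPart Vert

/-!
If `A ∈ I` and `Aᶜ ∈ J`, then `A` absorbs every set modulo `J`, so `I ⊥ J` makes `I` a
`P(J)`-ideal; part (a) follows because `Sel ⊆ ED`. For part (b), keep the complement of a single
vertical as one piece of `B` and cut that vertical into infinitely many infinite pieces. The
vertical is in `ED`, which gives `ED ⊥ Fin(B)`. A set in `Sel` meets the vertical in a finite set,
so `Sel ⊆ Fin(B)`, and `Sel ⊥ Fin(B)` would then put the whole plane into `Fin(B)`.
-/

open scoped Function

section Orthogonality

variable {α : Type*} {I J K : Set (Set α)}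

theorem Orth.mono_left (h : Orth I J) (hIK : I ⊆ K) : Orth K J :=
  let ⟨A, hA, hAc⟩ := h
  ⟨A, hIK hA, hAc⟩

theorem Orth.isPJIdeal (h : Orth I J) (hJ : IsLowerSet J) : IsPJIdeal I J :=
  let ⟨A, hA, hAc⟩ := h
  fun f _ => ⟨A, hA, fun n => hJ (sdiff_subset_compl (f n) A) hAc⟩

theorem not_orth_of_subset (hIJ : I ⊆ J) (hJ : SupClosed J) (huniv : univ ∉ J) : ¬ Orth I J := by
  rintro ⟨A, hA, hAc⟩
  exact huniv (union_compl_self A ▸ hJ (hIJ hA) hAc)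

end Orthogonality

section PartitionIdeals

variable {A B : ℕ → Set (ℕ × ℕ)}

theorem isLowerSet_finPart : IsLowerSet (FinPart B) := by
  rintro X Y hYX ⟨F, hF⟩
  exact ⟨F, hF.subset (sdiff_subset_sdiff_left hYX)⟩

theorem supClosed_finPart : SupClosed (FinPart B) := by
  rintro X ⟨F, hF⟩ Y ⟨G, hG⟩
  refine ⟨F ∪ G, (hF.union hG).subset ?_⟩
  rw [Finset.set_biUnion_union, sup_sdiff]
  exact union_subset_union (sdiff_subset_sdiff_right subset_union_left)
    (sdiff_subset_sdiff_right subset_union_right)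

theorem mem_finPart_self (n : ℕ) : B n ∈ FinPart B :=
  ⟨{n}, by simp⟩

theorem univ_notMem_finPart (hinf : ∀ n, (B n).Infinite) (hdisj : Pairwise (Disjoint on B)) :
    univ ∉ FinPart B := by
  rintro ⟨F, hF⟩
  obtain ⟨k, hk⟩ := Infinite.exists_notMem_finset F
  have hBk : Disjoint (B k) (⋃ n ∈ F, B n) :=
    disjoint_iUnion₂_right.2 fun n hn => hdisj (ne_of_mem_of_not_mem hn hk).symm
  exact hinf k (hF.subset (subset_sdiff.2 ⟨subset_univ _, hBk⟩))

theorem selPart_subset_edPart : SelPart A ⊆ EDPart A := by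
  rintro X ⟨m, hm⟩
  exact ⟨m, finite_empty.subset fun n hn => (hm n).not_gt hn⟩

theorem mem_edPart_self (hdisj : Pairwise (Disjoint on A)) (k : ℕ) : A k ∈ EDPart A := by
  refine ⟨0, (finite_singleton k).subset fun n hn => ?_⟩
  by_contra hnk
  have hempty : A k ∩ A n = ∅ := (hdisj (Ne.symm hnk)).inter_eq
  simp [hempty] at hn

theorem selPart_subset_finPart_of_eq_compl {k n : ℕ} (h : B n = (A k)ᶜ) :
    SelPart A ⊆ FinPart B := by
  rintro X ⟨m, hm⟩
  refine ⟨{n}, ?_⟩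
  rw [Finset.set_biUnion_singleton, h, sdiff_compl]
  exact finite_of_encard_le_coe (hm k)

theorem orth_edPart_finPart_of_eq_compl (hdisj : Pairwise (Disjoint on A)) {k n : ℕ}
    (h : B n = (A k)ᶜ) : Orth (EDPart A) (FinPart B) :=
  ⟨A k, mem_edPart_self hdisj k, h ▸ mem_finPart_self n⟩

theorem IsPartition.pairwise_disjoint (hB : IsPartition B) : Pairwise (Disjoint on B) :=
  fun i j hij => disjoint_iff_inter_eq_empty.2 (hB.2.1 i j hij)

end PartitionIdeals

section Partitions

theorem isPartition_preimage_singleton {g : ℕ × ℕ → ℕ} (hg : ∀ n, (g ⁻¹' {n}).Infinite) :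
    IsPartition fun n => g ⁻¹' {n} :=
  ⟨hg, fun _ _ hij => (pairwise_disjoint_fiber g hij).inter_eq, by
    rw [← preimage_iUnion, iUnion_of_singleton, preimage_univ]⟩

theorem exists_isPartition_zero_eq {s : Set (ℕ × ℕ)} (hs : s.Infinite) (hsc : sᶜ.Infinite) :
    ∃ B, IsPartition B ∧ B 0 = s := by
  classical
  have : Infinite ↑sᶜ := hsc.to_subtype
  obtain ⟨e⟩ : Nonempty (↑sᶜ ≃ ℕ × ℕ) := nonempty_equiv_of_countable
  let g : ℕ × ℕ → ℕ := fun p => if h : p ∈ s then 0 else (e ⟨p, h⟩).1 + 1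
  have hzero : g ⁻¹' {0} = s := by
    ext p
    by_cases hp : p ∈ s <;> simp [g, hp]
  have hsucc (n m : ℕ) : g (e.symm (n, m)) = n + 1 := by
    have hp : (e.symm (n, m) : ℕ × ℕ) ∉ s := (e.symm (n, m)).2
    simp [g, hp]
  refine ⟨_, isPartition_preimage_singleton (g := g) fun n => ?_, hzero⟩
  cases n with
  | zero => rwa [hzero]
  | succ n =>
    refine infinite_of_injective_forall_mem (f := fun m => (e.symm (n, m) : ℕ × ℕ)) ?_ (hsucc n)
    exact Subtype.val_injective.comp (e.symm.injective.comp (Prod.mk_right_injective n))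

theorem infinite_vert (n : ℕ) : (Vert n).Infinite :=
  infinite_of_injective_forall_mem (Prod.mk_right_injective n) fun _ => rfl

theorem pairwise_disjoint_vert : Pairwise (Disjoint on Vert) :=
  pairwise_disjoint_fiber Prod.fst

end Partitions

theorem stmt16_general (A : ℕ → Set (ℕ × ℕ)) (hinf : ∀ n, (A n).Infinite)
    (hdisj : Pairwise (Disjoint on A)) :
    (∀ B : ℕ → Set (ℕ × ℕ),
      Orth (SelPart A) (FinPart B) → IsPJIdeal (EDPart A) (FinPart B)) ∧
    (∃ B : ℕ → Set (ℕ × ℕ), IsPartition B ∧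
      IsPJIdeal (EDPart A) (FinPart B) ∧ ¬ Orth (SelPart A) (FinPart B) ∧
      SelPart A ⊆ FinPart B ∧ Orth (EDPart A) (FinPart B)) := by
  refine ⟨fun B h => (h.mono_left selPart_subset_edPart).isPJIdeal isLowerSet_finPart, ?_⟩
  have hcompl : (A 0)ᶜ.Infinite :=
    (hinf 1).mono (hdisj one_ne_zero).subset_compl_right
  obtain ⟨B, hB, hB0⟩ := exists_isPartition_zero_eq hcompl ((compl_compl (A 0)).symm ▸ hinf 0)
  have hsub : SelPart A ⊆ FinPart B := selPart_subset_finPart_of_eq_compl hB0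
  have horth : Orth (EDPart A) (FinPart B) := orth_edPart_finPart_of_eq_compl hdisj hB0
  have huniv : univ ∉ FinPart B := univ_notMem_finPart hB.1 hB.pairwise_disjoint
  exact ⟨B, hB, horth.isPJIdeal isLowerSet_finPart,
    not_orth_of_subset hsub supClosed_finPart huniv, hsub, horth⟩

theorem stmt16 :
    (∀ B : ℕ → Set (ℕ × ℕ), IsPartition B →
      Orth SelI (FinPart B) → IsPJIdeal EDI (FinPart B)) ∧
    (∃ B : ℕ → Set (ℕ × ℕ), IsPartition B ∧
      IsPJIdeal EDI (FinPart B) ∧ ¬ Orth SelI (FinPart B) ∧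
      SelI ⊆ FinPart B ∧ Orth EDI (FinPart B)) := by
  obtain ⟨hpos, hconv⟩ := stmt16_general Vert infinite_vert pairwise_disjoint_vert
  exact ⟨fun B _ => hpos B, hconv⟩
end

section
/- Let B be a partition of ℕ×ℕ into infinitely many infinite sets. The following are equivalent: (1) Sel is a P(OFin(B))-ideal; (2) Sel ⊆↾ OFin(B); (3) there exists k ∈ ℕ such that for every m > k there is no (ω,m)-tower of B-monochromatic functions; (4) for every countable family F of functions from ℕ to ℕ there exists a finite family F' of functions from ℕ to ℕ such that for every f ∈ F and every B ∈ B, the set (graph(f) ∩ B) \ ⋃_{g∈F'} graph(g) is finite. -/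
open Set

/-- A subset of `ℕ × ℕ` is the graph of a partial function from `ℕ` to `ℕ`. -/
def IsPFunGraph (g : Set (ℕ × ℕ)) : Prop :=
  ∀ p ∈ g, ∀ q ∈ g, p.1 = q.1 → p = q

/-- The domain of (the graph of) a partial function. -/
def pdom (g : Set (ℕ × ℕ)) : Set ℕ := Prod.fst '' g

/-- The graph of a total function `ℕ → ℕ`. -/
def totGraph (f : ℕ → ℕ) : Set (ℕ × ℕ) := {p | f p.1 = p.2}

/-- A `(κ, lam)`-tower of functions: `lam` many pairwise disjoint nonempty
partial functions from `ℕ` to `ℕ`, all with the same domain of cardinality `κ`. -/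
def IsTower (κ lam : ℕ∞) (T : Set (Set (ℕ × ℕ))) : Prop :=
  T.encard = lam ∧
  (∀ g ∈ T, IsPFunGraph g ∧ g.Nonempty) ∧
  (∃ a : Set ℕ, a.encard = κ ∧ ∀ g ∈ T, pdom g = a) ∧
  (∀ g ∈ T, ∀ g' ∈ T, g ≠ g' → g ∩ g' = ∅)

/-- A `(κ, lam)`-tower of `B`-monochromatic functions. -/
def IsMonoTower (B : ℕ → Set (ℕ × ℕ)) (κ lam : ℕ∞) (T : Set (Set (ℕ × ℕ))) : Prop :=
  IsTower κ lam T ∧ ∀ g ∈ T, ∃ n, g ⊆ B n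

/-- The (indices of the) colors used by a tower: `C_T`. -/
def towerColors (B : ℕ → Set (ℕ × ℕ)) (T : Set (Set (ℕ × ℕ))) : Set ℕ :=
  {n | ∃ g ∈ T, g ⊆ B n}

/-- The domain of a tower: `dom(T)`. -/
def towerDom (T : Set (Set (ℕ × ℕ))) : Set ℕ := ⋃ g ∈ T, pdom g

/-- A sequence of essentially different towers: pairwise disjoint color sets
and pairwise disjoint domains. -/
def EssDiff (B : ℕ → Set (ℕ × ℕ)) (T : ℕ → Set (Set (ℕ × ℕ))) : Prop :=
  ∀ i j, i ≠ j → towerColors B (T i) ∩ towerColors B (T j) = ∅ ∧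
    towerDom (T i) ∩ towerDom (T j) = ∅

/-!
(2) ⇒ (1) is immediate, and (1) ⇒ (4) holds because each member of `Sel` is covered by finitely
many graphs of functions.

(4) ⇒ (3): otherwise there are monochromatic `(ω, m)`-towers for arbitrarily large `m`. Their
members form a countable family, so finitely many functions `F'` cover each member up to finitely
many points. Take a tower with more than `|F'|` members and a point `x` of its domain beyond the
exceptional points: its members have distinct values at `x`, each being the value of some `f ∈ F'`.

(3) ⇒ (2): put `A j = B 0 ∪ ⋯ ∪ B j`. If `A j` had more than `k` points in infinitely many columns,
the pigeonhole principle applied to the colors of these points would yield a monochromatic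
`(ω, k + 1)`-tower. So for each `j` only finitely many columns meet `A j` in more than `k` points,
and `E` can be taken to consist of the points of `A j`, for all `j`, in the other columns.
-/

theorem encard_biUnion_le_of_directedOn {α ι : Type*} {f : ι → Set α} {c : Set ι} {m : ℕ}
    (hc : DirectedOn (fun i j => f i ⊆ f j) c) (hm : ∀ i ∈ c, (f i).encard ≤ m) :
    (⋃ i ∈ c, f i).encard ≤ m := by
  by_contra! hlt
  obtain ⟨t, ht, ht_card⟩ := exists_subset_encard_eq (Order.add_one_le_of_lt hlt)
  have ht_fin : t.Finite := finite_of_encard_eq_coe (k := m + 1) (mod_cast ht_card)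
  lift t to Finset α using ht_fin
  have hc_ne : c.Nonempty := by
    by_contra! hempty
    simp [hempty] at hlt
  obtain ⟨i, hi, hti⟩ := hc.exists_mem_subset_of_finset_subset_biUnion hc_ne ht
  have hle : (m : ℕ∞) + 1 ≤ m := ht_card ▸ (encard_le_encard hti).trans (hm i hi)
  exact absurd (mod_cast hle : m + 1 ≤ m) (Nat.not_succ_le_self m)

theorem exists_infinite_inter_preimage_singleton {α β : Type*} {f : α → β} {s : Set α} {t : Set β}
    (hs : s.Infinite) (ht : t.Finite) (hf : MapsTo f s t) :
    ∃ b ∈ t, (s ∩ f ⁻¹' {b}).Infinite := by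
  by_contra! hfin
  exact hs ((ht.biUnion hfin).subset fun x hx => mem_biUnion (hf hx) ⟨hx, rfl⟩)

theorem SubRestr.isPJIdeal {α : Type*} {I J : Set (Set α)} (h : SubRestr I J) :
    IsPJIdeal I J := by
  obtain ⟨E, hE, hIE⟩ := h
  exact fun f hf => ⟨E, hE, fun n => hIE _ (hf n)⟩

theorem encard_inter_Vert (X : Set (ℕ × ℕ)) (x : ℕ) :
    (X ∩ Vert x).encard = (Prod.mk x ⁻¹' X).encard := by
  have himage : Prod.mk x '' (Prod.mk x ⁻¹' X) = X ∩ Vert x := by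
    rw [image_preimage_eq_inter_range]
    congr 1
    ext ⟨a, b⟩
    simp [Vert, eq_comm]
  rw [← himage, (Prod.mk_right_injective x).encard_image]

theorem totGraph_mem_SelI (f : ℕ → ℕ) : totGraph f ∈ SelI := by
  refine ⟨1, fun x => ?_⟩
  have hsection : Prod.mk x ⁻¹' totGraph f = {f x} := by
    ext y
    simp [totGraph, eq_comm]
  rw [encard_inter_Vert, hsection, encard_singleton, Nat.cast_one]

theorem exists_finset_subset_biUnion_totGraph {X : Set (ℕ × ℕ)} (hX : X ∈ SelI) :
    ∃ F : Finset (ℕ → ℕ), X ⊆ ⋃ f ∈ F, totGraph f := by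
  classical
  obtain ⟨m, hm⟩ := hX
  refine ⟨(Finset.range m).image fun i x => Nat.nth (fun y => (x, y) ∈ X) i, ?_⟩
  rintro ⟨x, y⟩ hxy
  have hle : {y | (x, y) ∈ X}.encard ≤ m := (encard_inter_Vert X x).symm.trans_le (hm x)
  have hfin : {y | (x, y) ∈ X}.Finite := finite_of_encard_le_coe hle
  have hcount : Nat.count (fun y => (x, y) ∈ X) y < m := by
    refine (Nat.count_lt_card hfin hxy).trans_le ?_
    exact_mod_cast hfin.encard_eq_coe_toFinset_card ▸ hle
  exact mem_biUnion (Finset.mem_image_of_mem _ (Finset.mem_range.2 hcount))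
    (Nat.nth_count (p := fun y => (x, y) ∈ X) hxy)

theorem IsPFunGraph.exists_subset_totGraph {g : Set (ℕ × ℕ)} (hg : IsPFunGraph g) :
    ∃ f : ℕ → ℕ, g ⊆ totGraph f := by
  obtain ⟨f, hf⟩ := exists_eq_graphOn_image_fst.2 fun p hp q hq => hg p hp q hq
  exact ⟨f, fun p hp => (mem_graphOn.1 (hf ▸ hp)).2⟩

theorem encard_le_card_of_forall_exists_mem {T : Set (Set (ℕ × ℕ))} {F : Finset (ℕ → ℕ)} {x : ℕ}
    (hdisj : ∀ g ∈ T, ∀ g' ∈ T, g ≠ g' → g ∩ g' = ∅) (hF : ∀ g ∈ T, ∃ f ∈ F, (x, f x) ∈ g) :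
    T.encard ≤ F.card := by
  choose! φ hφF hφg using hF
  rw [← encard_coe_eq_coe_finsetCard]
  refine encard_le_encard_of_injOn (f := φ) hφF fun g hg g' hg' heq => ?_
  by_contra hne
  have hmem : (x, φ g x) ∈ g ∩ g' := ⟨hφg g hg, heq ▸ hφg g' hg'⟩
  simp [hdisj g hg g' hg' hne] at hmem

theorem IsTower.le_card_of_finite_sdiff {m : ℕ} {T : Set (Set (ℕ × ℕ))} (hT : IsTower ⊤ m T)
    {F : Finset (ℕ → ℕ)} (hF : ∀ g ∈ T, (g \ ⋃ f ∈ F, totGraph f).Finite) :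
    m ≤ F.card := by
  obtain ⟨hcard, -, ⟨a, ha, hdom⟩, hdisj⟩ := hT
  have hexc : (⋃ g ∈ T, pdom (g \ ⋃ f ∈ F, totGraph f)).Finite :=
    (finite_of_encard_eq_coe hcard).biUnion fun g hg => (hF g hg).image _
  obtain ⟨x, hxa, hx⟩ := ((encard_eq_top_iff.1 ha).sdiff hexc).nonempty
  have hvalue : ∀ g ∈ T, ∃ f ∈ F, (x, f x) ∈ g := by
    intro g hg
    obtain ⟨⟨x, y⟩, hxy, rfl⟩ : x ∈ pdom g := hdom g hg ▸ hxa
    have hcov : (x, y) ∈ ⋃ f ∈ F, totGraph f := by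
      by_contra hnot
      exact hx (mem_biUnion hg ⟨_, ⟨hxy, hnot⟩, rfl⟩)
    obtain ⟨f, hf, hfy : f x = y⟩ := mem_iUnion₂.1 hcov
    exact ⟨f, hf, by rwa [hfy]⟩
  exact_mod_cast hcard ▸ encard_le_card_of_forall_exists_mem hdisj hvalue

theorem isTower_range_graphOn {ι : Type*} {D : Set ℕ} {e : ℕ → ι → ℕ} (hD : D.Nonempty)
    (he : ∀ x ∈ D, Function.Injective (e x)) :
    IsTower D.encard (ENat.card ι) (range fun i => D.graphOn fun x => e x i) := by
  have hindex : ∀ i j p, p ∈ D.graphOn (fun x => e x i) → p ∈ D.graphOn (fun x => e x j) →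
      i = j := by
    intro i j p hi hj
    rw [mem_graphOn] at hi hj
    exact he p.1 hi.1 (hi.2.trans hj.2.symm)
  have hinj : Function.Injective fun i => D.graphOn fun x => e x i := by
    intro i j (hij : D.graphOn _ = D.graphOn _)
    obtain ⟨p, hp⟩ := (graphOn_nonempty (f := fun x => e x i)).2 hD
    exact hindex i j p hp (hij ▸ hp)
  refine ⟨?_, ?_, ⟨D, rfl, ?_⟩, ?_⟩
  · rw [← image_univ, hinj.encard_image, encard_univ]
  · rintro _ ⟨i, rfl⟩
    exact ⟨fun p hp q hq => fst_injOn_graph hp hq, graphOn_nonempty.2 hD⟩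
  · rintro _ ⟨i, rfl⟩
    exact image_fst_graphOn _ _
  · rintro _ ⟨i, rfl⟩ _ ⟨j, rfl⟩ hne
    rw [← disjoint_iff_inter_eq_empty, disjoint_left]
    exact fun p hi hj => hne (hindex i j p hi hj ▸ rfl)

theorem exists_injective_forall_mem_of_le_encard {X : Set (ℕ × ℕ)} {x m : ℕ}
    (h : m ≤ (X ∩ Vert x).encard) :
    ∃ e : Fin m → ℕ, Function.Injective e ∧ ∀ i, (x, e i) ∈ X := by
  rw [encard_inter_Vert] at h
  obtain ⟨e, he, hinj⟩ := (finite_univ (α := Fin m)).exists_injOn_of_encard_le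
    (t := Prod.mk x ⁻¹' X) (by simpa using h)
  exact ⟨e, injOn_univ.1 hinj, fun i => he (mem_univ i)⟩

section

variable {B : ℕ → Set (ℕ × ℕ)}

theorem exists_isMonoTower_of_infinite {s D : Set ℕ} {m : ℕ} (hs : s.Finite) (hD : D.Infinite)
    (hm : ∀ x ∈ D, m ≤ ((⋃ b ∈ s, B b) ∩ Vert x).encard) :
    ∃ T, IsMonoTower B ⊤ m T := by
  have hcolumn : ∀ x ∈ D, ∃ e c : Fin m → ℕ,
      Function.Injective e ∧ ∀ i, c i ∈ s ∧ (x, e i) ∈ B (c i) := by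
    intro x hx
    obtain ⟨e, he, hmem⟩ := exists_injective_forall_mem_of_le_encard (hm x hx)
    choose c hcs hcB using fun i => mem_iUnion₂.1 (hmem i)
    exact ⟨e, c, he, fun i => ⟨hcs i, hcB i⟩⟩
  choose! e c he hc using hcolumn
  obtain ⟨color, -, hinf⟩ := exists_infinite_inter_preimage_singleton (f := c)
    hD (Finite.pi fun _ : Fin m => hs) fun x hx i _ => (hc x hx i).1
  have htower := isTower_range_graphOn hinf.nonempty fun x hx => he x hx.1
  rw [hinf.encard_eq, ENat.card_eq_coe_fintype_card, Fintype.card_fin] at htower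
  refine ⟨_, htower, ?_⟩
  rintro _ ⟨i, rfl⟩
  refine ⟨color i, ?_⟩
  rintro _ ⟨x, ⟨hx, rfl⟩, rfl⟩
  exact (hc x hx i).2

theorem exists_finset_forall_finite_sdiff_of_countable {G : Set (Set (ℕ × ℕ))}
    (h : ∀ F : ℕ → ℕ → ℕ, ∃ F' : Finset (ℕ → ℕ), ∀ n b : ℕ,
      ((totGraph (F n) ∩ B b) \ ⋃ f ∈ F', totGraph f).Finite)
    (hG : G.Countable) (hfun : ∀ g ∈ G, IsPFunGraph g) (hmono : ∀ g ∈ G, ∃ b, g ⊆ B b) :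
    ∃ F' : Finset (ℕ → ℕ), ∀ g ∈ G, (g \ ⋃ f ∈ F', totGraph f).Finite := by
  choose! φ hφ using fun g hg => (hfun g hg).exists_subset_totGraph
  obtain ⟨F, hF⟩ := countable_iff_exists_subset_range.1 (hG.image φ)
  obtain ⟨F', hF'⟩ := h F
  refine ⟨F', fun g hg => ?_⟩
  obtain ⟨n, hn⟩ := hF (mem_image_of_mem φ hg)
  obtain ⟨b, hb⟩ := hmono g hg
  exact (hF' n b).subset (sdiff_subset_sdiff_left (subset_inter (hn ▸ hφ g hg) hb))

theorem exists_forall_not_isMonoTower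
    (h : ∀ F : ℕ → ℕ → ℕ, ∃ F' : Finset (ℕ → ℕ), ∀ n b : ℕ,
      ((totGraph (F n) ∩ B b) \ ⋃ f ∈ F', totGraph f).Finite) :
    ∃ k : ℕ, ∀ m : ℕ, k < m → ∀ T : Set (Set (ℕ × ℕ)), ¬ IsMonoTower B ⊤ (m : ℕ∞) T := by
  by_contra! hlarge
  choose m hm T hT using hlarge
  have hcount : (⋃ k, T k).Countable :=
    countable_iUnion fun k => (finite_of_encard_eq_coe (hT k).1.1).countable
  obtain ⟨F', hF'⟩ := exists_finset_forall_finite_sdiff_of_countable h hcount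
    (fun g hg => let ⟨k, hgk⟩ := mem_iUnion.1 hg; ((hT k).1.2.1 g hgk).1)
    (fun g hg => let ⟨k, hgk⟩ := mem_iUnion.1 hg; (hT k).2 g hgk)
  have hle : m F'.card ≤ F'.card :=
    (hT F'.card).1.le_card_of_finite_sdiff fun g hg => hF' g (mem_iUnion_of_mem _ hg)
  exact (hm F'.card).not_ge hle

/-- The points of `A j`, over all `j`, lying in columns that meet `A j` in at most `k` points. For
increasing `A` it belongs to `Sel`, and it witnesses `Sel ⊆↾ OFin(A)` when, for each `j`, only
finitely many columns meet `A j` in more than `k` points. -/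
def slimPart (A : ℕ → Set (ℕ × ℕ)) (k : ℕ) : Set (ℕ × ℕ) :=
  {p | ∃ j, p ∈ A j ∧ (A j ∩ Vert p.1).encard ≤ k}

theorem slimPart_mem_SelI {A : ℕ → Set (ℕ × ℕ)} (hA : Monotone A) (k : ℕ) :
    slimPart A k ∈ SelI := by
  refine ⟨k, fun x => ?_⟩
  have hsub : slimPart A k ∩ Vert x ⊆ ⋃ j ∈ {j | (A j ∩ Vert x).encard ≤ k}, A j ∩ Vert x := by
    rintro p ⟨⟨j, hpj, hj⟩, rfl⟩
    exact mem_biUnion hj ⟨hpj, rfl⟩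
  have hmono : Monotone fun j => A j ∩ Vert x := fun i j hij => inter_subset_inter_left _ (hA hij)
  refine (encard_le_encard hsub).trans (encard_biUnion_le_of_directedOn ?_ fun j hj => hj)
  intro i hi j hj
  rcases le_total i j with hij | hji
  · exact ⟨j, hj, hmono hij, Subset.rfl⟩
  · exact ⟨i, hi, Subset.rfl, hmono hji⟩

theorem sdiff_slimPart_mem_OFinPart {A : ℕ → Set (ℕ × ℕ)} {k : ℕ} {X : Set (ℕ × ℕ)}
    (hk : ∀ j, {x | (k : ℕ∞) < (A j ∩ Vert x).encard}.Finite) (hX : X ∈ SelI) :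
    X \ slimPart A k ∈ OFinPart A := by
  obtain ⟨m, hm⟩ := hX
  intro j
  refine ((hk j).biUnion fun x _ => finite_of_encard_le_coe (hm x)).subset ?_
  rintro p ⟨⟨hpX, hp⟩, hpj⟩
  have hlt : (k : ℕ∞) < (A j ∩ Vert p.1).encard := not_le.1 fun hle => hp ⟨j, hpj, hle⟩
  exact mem_biUnion (show p.1 ∈ {x | (k : ℕ∞) < (A j ∩ Vert x).encard} from hlt) ⟨hpX, rfl⟩

theorem OFinPart_accumulate_subset : OFinPart (accumulate B) ⊆ OFinPart B :=
  fun _ hX j => (hX j).subset (inter_subset_inter_right _ subset_accumulate)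

theorem subRestr_SelI_OFinPart_of_forall_not_isMonoTower {k : ℕ}
    (hk : ∀ T, ¬ IsMonoTower B ⊤ ((k + 1 : ℕ) : ℕ∞) T) :
    SubRestr SelI (OFinPart B) := by
  have hfin : ∀ j, {x | (k : ℕ∞) < (accumulate B j ∩ Vert x).encard}.Finite := by
    intro j
    by_contra hinf
    obtain ⟨T, hT⟩ := exists_isMonoTower_of_infinite (B := B) (m := k + 1) (finite_Iic j) hinf
      fun x hx => by exact_mod_cast Order.add_one_le_of_lt (mem_ofPred.1 hx)
    exact hk T hT
  exact ⟨slimPart (accumulate B) k, slimPart_mem_SelI monotone_accumulate k,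
    fun _ hX => OFinPart_accumulate_subset (sdiff_slimPart_mem_OFinPart hfin hX)⟩

theorem IsPJIdeal.exists_finset_forall_finite_sdiff (h : IsPJIdeal SelI (OFinPart B))
    (F : ℕ → ℕ → ℕ) :
    ∃ F' : Finset (ℕ → ℕ), ∀ n b : ℕ,
      ((totGraph (F n) ∩ B b) \ ⋃ f ∈ F', totGraph f).Finite := by
  obtain ⟨A, hA, hFA⟩ := h (fun n => totGraph (F n)) fun n => totGraph_mem_SelI (F n)
  obtain ⟨F', hF'⟩ := exists_finset_subset_biUnion_totGraph hA
  refine ⟨F', fun n b => (hFA n b).subset ?_⟩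
  rintro p ⟨⟨hpF, hpB⟩, hp⟩
  exact ⟨⟨hpF, fun hpA => hp (hF' hpA)⟩, hpB⟩

end

theorem stmt17_general (B : ℕ → Set (ℕ × ℕ)) :
    List.TFAE [
      IsPJIdeal SelI (OFinPart B),
      SubRestr SelI (OFinPart B),
      ∃ k : ℕ, ∀ m : ℕ, k < m →
        ∀ T : Set (Set (ℕ × ℕ)), ¬ IsMonoTower B ⊤ (m : ℕ∞) T,
      ∀ F : ℕ → ℕ → ℕ, ∃ F' : Finset (ℕ → ℕ), ∀ n b : ℕ,
        ((totGraph (F n) ∩ B b) \ ⋃ g ∈ F', totGraph g).Finite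
    ] := by
  tfae_have 2 → 1 := SubRestr.isPJIdeal
  tfae_have 1 → 4 := IsPJIdeal.exists_finset_forall_finite_sdiff
  tfae_have 4 → 3 := exists_forall_not_isMonoTower
  tfae_have 3 → 2 := fun ⟨k, hk⟩ =>
    subRestr_SelI_OFinPart_of_forall_not_isMonoTower (hk (k + 1) k.lt_succ_self)
  tfae_finish

theorem stmt17 (B : ℕ → Set (ℕ × ℕ)) (hB : IsPartition B) :
    List.TFAE [
      IsPJIdeal SelI (OFinPart B),
      SubRestr SelI (OFinPart B),
      ∃ k : ℕ, ∀ m : ℕ, k < m →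
        ∀ T : Set (Set (ℕ × ℕ)), ¬ IsMonoTower B ⊤ (m : ℕ∞) T,
      ∀ F : ℕ → ℕ → ℕ, ∃ F' : Finset (ℕ → ℕ), ∀ n b : ℕ,
        ((totGraph (F n) ∩ B b) \ ⋃ g ∈ F', totGraph g).Finite
    ] :=
  stmt17_general B
end
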